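/- Let S be a positive signature and w = g_1…g_ℓ ∈ S* a word on S. Then f_min(w) ≼ f_max(w), and the interval W(w) = {f : f_min(w) ≼ f ≼ f_max(w)}, ordered by ≼, is a lattice: any two elements of W(w) have a greatest lower bound and a least upper bound in W(w). -/

import Mathlib

open scoped BigOperators

/-- An `S`-term over a signature given by a type `S` of generators with arity map `ar`. -/
inductive STerm (S : Type) (ar : S → ℕ) : Type
  | leaf : STerm S ar
  | node (g : S) (c : Fin (ar g) → STerm S ar) : STerm S ar

namespace STerm

variable {S : Type} {ar : S → ℕ}

/-- The arity of a term: its number of leaves. -/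
def arity : STerm S ar → ℕ
  | leaf => 1
  | node _ c => ∑ i, (c i).arity

/-- The degree of a term: its number of internal nodes. -/
def degree : STerm S ar → ℕ
  | leaf => 0
  | node _ c => 1 + ∑ i, (c i).degree

/-- The word of decorations of internal nodes along left-to-right preorder traversal. -/
def decs : STerm S ar → List S
  | leaf => []
  | node g c => g :: (List.ofFn fun i => (c i).decs).flatten

/-- Grafting `t⟨l⟩`: the `i`-th leaf (left-to-right) is replaced by the `i`-th entry of `l`. -/
def graftList : STerm S ar → List (STerm S ar) → STerm S ar
  | leaf, l => l.headD leaf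
  | node g c, l =>
      node g fun i =>
        (c i).graftList
          ((l.drop (∑ j : Fin (ar g), if (j : ℕ) < (i : ℕ) then (c j).arity else 0)).take
            (c i).arity)

/-- Grafting a term at the rightmost leaf. -/
def graftRight : STerm S ar → STerm S ar → STerm S ar
  | leaf, s => s
  | node g c, s => node g fun i => if (i : ℕ) = ar g - 1 then (c i).graftRight s else c i

/-- Grafting a term at the leftmost (first) leaf, i.e. `∘₁`. -/
def graftFirst : STerm S ar → STerm S ar → STerm S ar
  | leaf, s => s
  | node g c, s => node g fun i => if (i : ℕ) = 0 then (c i).graftFirst s else c i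

/-- Preorder traversal word: `none` for leaves, `some g` for an internal node decorated by `g`. -/
def preo : STerm S ar → List (Option S)
  | leaf => [none]
  | node g c => some g :: (List.ofFn fun i => (c i).preo).flatten

/-- The number of extremal leaves of a term: leaves which come after every internal
node in the preorder traversal. -/
def extremalCount (t : STerm S ar) : ℕ :=
  (t.preo.reverse.takeWhile fun o => o.isNone).length

/-- The list of edges `(i, j, i')` (`i'` is the `j`-th child of `i`, `j` being 1-based) between
internal nodes, internal nodes being numbered from `0` in preorder. -/
def edges : STerm S ar → List (ℕ × ℕ × ℕ)
  | leaf => []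
  | node g c =>
      (List.ofFn fun i : Fin (ar g) =>
        (match c i with
          | leaf => ([] : List (ℕ × ℕ × ℕ))
          | node _ _ =>
            [(0, (i : ℕ) + 1,
               1 + ∑ j : Fin (ar g), if (j : ℕ) < (i : ℕ) then (c j).degree else 0)]) ++
          (c i).edges.map fun e =>
            (e.1 + (1 + ∑ j : Fin (ar g), if (j : ℕ) < (i : ℕ) then (c j).degree else 0), e.2.1,
              e.2.2 + (1 + ∑ j : Fin (ar g), if (j : ℕ) < (i : ℕ) then (c j).degree else 0))).flatten

/-- The easterly wind move inside a term: a subterm rooted at an internal node which has an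
immediate left sibling is detached (replaced by a leaf) and grafted onto the rightmost leaf of
the subtree rooted at this left sibling. -/
inductive TermMove : STerm S ar → STerm S ar → Prop
  | here (g : S) (c : Fin (ar g) → STerm S ar) (j j' : Fin (ar g))
      (hj : (j' : ℕ) = (j : ℕ) + 1) (hne : c j' ≠ leaf) :
      TermMove (node g c)
        (node g (Function.update (Function.update c j ((c j).graftRight (c j'))) j' leaf))
  | child (g : S) (c : Fin (ar g) → STerm S ar) (i : Fin (ar g)) (t' : STerm S ar) :
      TermMove (c i) t' → TermMove (node g c) (node g (Function.update c i t'))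

end STerm
section Forest

variable {S : Type} {ar : S → ℕ}

/-- A forest is reduced when none of its trees is a leaf. -/
def IsReducedF (f : List (STerm S ar)) : Prop := ∀ t ∈ f, t ≠ STerm.leaf

/-- The easterly wind move on forests: either the root of a tree having an immediate left
sibling tree is detached and grafted onto the rightmost leaf of this left sibling, or a move
happens inside one of the trees. -/
inductive ForestMove : List (STerm S ar) → List (STerm S ar) → Prop
  | root (pre : List (STerm S ar)) (t t' : STerm S ar) (post : List (STerm S ar)) :
      t' ≠ STerm.leaf → ForestMove (pre ++ t :: t' :: post) (pre ++ t.graftRight t' :: post)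
  | tree (pre : List (STerm S ar)) (t t' : STerm S ar) (post : List (STerm S ar)) :
      STerm.TermMove t t' → ForestMove (pre ++ t :: post) (pre ++ t' :: post)

/-- The relation `≼`: reflexive and transitive closure of the easterly wind move. -/
def EWLe (f f' : List (STerm S ar)) : Prop := Relation.ReflTransGen ForestMove f f'

/-- Decoration word of a forest. -/
def forestDecs (f : List (STerm S ar)) : List S := (f.map STerm.decs).flatten

/-- Degree (number of internal nodes) of a forest. -/
def forestDeg (f : List (STerm S ar)) : ℕ := (f.map STerm.degree).sum

/-- Preorder indices (from 0) of the roots of the trees of a forest. -/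
def rootIdxs : List (STerm S ar) → List ℕ
  | [] => []
  | t :: r => 0 :: (rootIdxs r).map (· + t.degree)

/-- Edges between internal nodes of a forest, numbered in preorder from 0. -/
def forestEdges : List (STerm S ar) → List (ℕ × ℕ × ℕ)
  | [] => []
  | t :: r => t.edges ++ (forestEdges r).map fun e => (e.1 + t.degree, e.2.1, e.2.2 + t.degree)

/-- Grafting the terms of `l` onto the successive extremal leaves of `t`. -/
def underSub (t : STerm S ar) (l : List (STerm S ar)) : STerm S ar :=
  t.graftList (List.ofFn (n := t.arity) fun p =>
    if (p : ℕ) < t.arity - t.extremalCount then STerm.leaf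
    else l.getD ((p : ℕ) - (t.arity - t.extremalCount)) STerm.leaf)

/-- The under product `f' △ f''` of two forests. -/
def underP (f' f'' : List (STerm S ar)) : List (STerm S ar) :=
  match f'.getLast? with
  | none => f''
  | some t => f'.dropLast ++ underSub t (f''.take t.extremalCount) :: f''.drop t.extremalCount

/-- The term `ι g` of degree 1 whose root is decorated by `g`. -/
def iotaT (g : S) : STerm S ar := STerm.node g fun _ => STerm.leaf

/-- The minimal forest of the interval `W(w)`. -/
def fmin (w : List S) : List (STerm S ar) := w.map iotaT

/-- The maximal forest of the interval `W(w)`: `ι g₁ ∘₁ ι g₂ ∘₁ ⋯ ∘₁ ι g_ℓ`. -/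
def fmax : List S → List (STerm S ar)
  | [] => []
  | g :: gs => [(gs.map iotaT).foldl STerm.graftFirst (iotaT g)]

end Forest
section Alphabet

variable {S : Type} {ar : S → ℕ}

/-- An `S`-forest-like alphabet: a type endowed with a root relation, decoration relations,
and edge relations. -/
structure ForestAlphabet (S : Type) (A : Type) where
  Root : A → Prop
  Dec : S → A → Prop
  Edge : ℕ → A → A → Prop

/-- `f`-compatibility `w ⊩^A f` of a word `w` over a forest-like alphabet. -/
def ForestAlphabet.Compat {A : Type} (Al : ForestAlphabet S A) (w : List A)
    (f : List (STerm S ar)) : Prop :=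
  w.length = forestDeg f ∧
  (∀ (i : ℕ) (hi : i < w.length), i ∈ rootIdxs f → Al.Root (w.get ⟨i, hi⟩)) ∧
  (∀ (i : ℕ) (hi : i < w.length) (hd : i < (forestDecs f).length),
      Al.Dec ((forestDecs f).get ⟨i, hd⟩) (w.get ⟨i, hi⟩)) ∧
  (∀ p j q, (p, j, q) ∈ forestEdges f → ∀ (hp : p < w.length) (hq : q < w.length),
      Al.Edge j (w.get ⟨p, hp⟩) (w.get ⟨q, hq⟩))

/-- The disjoint sum of two forest-like alphabets. -/
def ForestAlphabet.dsum {A B : Type} (Al : ForestAlphabet S A) (Bl : ForestAlphabet S B) :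
    ForestAlphabet S (A ⊕ B) where
  Root := Sum.elim Al.Root Bl.Root
  Dec g := Sum.elim (Al.Dec g) (Bl.Dec g)
  Edge j x y :=
    match x, y with
    | Sum.inl a, Sum.inl a' => Al.Edge j a a'
    | Sum.inr b, Sum.inr b' => Bl.Edge j b b'
    | Sum.inl _, Sum.inr b => Bl.Root b
    | Sum.inr _, Sum.inl _ => False

/-- The alphabet `𝔸_S` with letters `a_{g,u}`, `g ∈ S`, `u ∈ ℕ*`. -/
def ASAlphabet (S : Type) : ForestAlphabet S (S × List ℕ) where
  Root a := ∃ ℓ, a.2 = List.replicate ℓ 0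
  Dec g a := a.1 = g
  Edge j a a' := ∃ ℓ, a'.2 = a.2 ++ j :: List.replicate ℓ 0

/-- The alphabet `A_ℕ` with letters `a_i`, `i ∈ ℕ`, where every letter is a root, every letter
has every decoration, and `a_i →_j a_{i'}` iff `i < i'`. -/
def ANAlphabet (S : Type) : ForestAlphabet S ℕ where
  Root _ := True
  Dec _ _ := True
  Edge _ i i' := i < i'

/-- The packing of a word of natural numbers. -/
def pck (w : List ℕ) : List ℕ :=
  w.map fun m => ((w.filter (· ≤ m)).dedup).length

end Alphabet
section Algebra

open scoped TensorProduct

variable {S : Type} {ar : S → ℕ}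

/-- Reduced `S`-terms. -/
abbrev RTerm (S : Type) (ar : S → ℕ) := {t : STerm S ar // t ≠ STerm.leaf}

/-- The map `rd` keeping the non-leaf entries of a sequence of terms. -/
def rdF : List (STerm S ar) → List (RTerm S ar)
  | [] => []
  | STerm.leaf :: r => rdF r
  | STerm.node g c :: r => ⟨STerm.node g c, fun h => nomatch h⟩ :: rdF r

/-- The natural Hopf algebra `N(S)` as a module: the monoid algebra of the free monoid on the
set of reduced `S`-terms. -/
abbrev NAlg (𝕂 : Type) [CommSemiring 𝕂] (S : Type) (ar : S → ℕ) :=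
  MonoidAlgebra 𝕂 (FreeMonoid (RTerm S ar))

/-- The basis element `E_f` of `N(S)` indexed by a reduced forest `f`. -/
noncomputable def EBasis (𝕂 : Type) [CommSemiring 𝕂] {S : Type} {ar : S → ℕ}
    (f : List (RTerm S ar)) : NAlg 𝕂 S ar :=
  MonoidAlgebra.of 𝕂 (FreeMonoid (RTerm S ar)) (FreeMonoid.ofList f)

/-- The coproduct `Δ` of `N(S)`, defined linearly on the basis by
`Δ E_f = Σ E_{rd(s₁…s_k)} ⊗ E_{rd(u₁…u_k)}`, the sum ranging over all factorizations
`t_m = s_m⟨ū_m⟩` of the entries of `f`. -/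
noncomputable def DeltaN (𝕂 : Type) [CommSemiring 𝕂] (S : Type) (ar : S → ℕ) :
    NAlg 𝕂 S ar →ₗ[𝕂] (NAlg 𝕂 S ar) ⊗[𝕂] (NAlg 𝕂 S ar) :=
  (Finsupp.lift ((NAlg 𝕂 S ar) ⊗[𝕂] (NAlg 𝕂 S ar)) 𝕂 (FreeMonoid (RTerm S ar)) fun m =>
    ∑ᶠ c ∈ {c : List (STerm S ar × List (STerm S ar)) |
        List.Forall₂ (fun p t => p.2.length = p.1.arity ∧ p.1.graftList p.2 = t.val) c
          (FreeMonoid.toList m)},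
      (EBasis 𝕂 (rdF (c.map Prod.fst))) ⊗ₜ[𝕂] (EBasis 𝕂 (rdF (c.flatMap Prod.snd)))) ∘ₗ
    (MonoidAlgebra.coeffLinearEquiv 𝕂).toLinearMap

end Algebra

namespace EW

open STerm

variable {S : Type} {ar : S → ℕ}

/-- Node with children given by a list. -/
def nd (g : S) (cs : List (STerm S ar)) : STerm S ar :=
  STerm.node g fun i => cs.getD (i : ℕ) STerm.leaf

lemma nd_ofFn (g : S) (c : Fin (ar g) → STerm S ar) : nd g (List.ofFn c) = STerm.node g c := by
  unfold nd
  congr 1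
  funext i
  simp [List.getD]

lemma ofFn_getD (n : ℕ) (cs : List (STerm S ar)) (h : cs.length = n) :
    List.ofFn (fun i : Fin n => cs.getD (i : ℕ) STerm.leaf) = cs := by
  subst h
  apply List.ext_getElem
  · simp
  · intro i h1 h2
    simp

lemma ofFn_update {n : ℕ} (c : Fin n → STerm S ar) (i : Fin n) (a : STerm S ar) :
    List.ofFn (Function.update c i a) = (List.ofFn c).set i a := by
  apply List.ext_getElem
  · simp
  · intro k h1 h2
    simp [List.getElem_set, Function.update_apply, Fin.ext_iff, eq_comm]

lemma ofFn_split1 {n : ℕ} (c : Fin n → STerm S ar) (i : Fin n) :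
    ∃ p q, List.ofFn c = p ++ c i :: q ∧
      ∀ a, List.ofFn (Function.update c i a) = p ++ a :: q := by
  refine ⟨(List.ofFn c).take i, (List.ofFn c).drop (i + 1), ?_, ?_⟩
  · have := List.take_append_drop (i : ℕ) (List.ofFn c)
    conv_lhs => rw [← this]
    rw [List.drop_eq_getElem_cons (by simp)]
    simp
  · intro a
    rw [ofFn_update, List.set_eq_take_append_cons_drop]
    simp

lemma ofFn_split2 {n : ℕ} (c : Fin n → STerm S ar) (j j' : Fin n) (h : (j' : ℕ) = j + 1) :
    ∃ p q, List.ofFn c = p ++ c j :: c j' :: q ∧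
      ∀ a b, List.ofFn (Function.update (Function.update c j a) j' b) = p ++ a :: b :: q := by
  refine ⟨(List.ofFn c).take j, (List.ofFn c).drop (j' + 1), ?_, ?_⟩
  · have := List.take_append_drop (j : ℕ) (List.ofFn c)
    conv_lhs => rw [← this]
    rw [List.drop_eq_getElem_cons (by simp)]
    rw [List.drop_eq_getElem_cons (i := (j:ℕ)+1) (by simp; omega)]
    simp [← h]
  · intro a b
    rw [ofFn_update, ofFn_update]
    rw [List.set_eq_take_append_cons_drop (i := (j : ℕ)), if_pos (by simp), h]
    have h2 := j'.2
    have h3 : (j : ℕ) + 1 < (List.ofFn c).length := by simp; omega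
    rw [List.drop_eq_getElem_cons h3]
    have h4 : ((List.ofFn c).take j).length = j := by simp
    rw [List.set_append_right _ _ (by simp), h4]
    simp

lemma degree_node (g : S) (c : Fin (ar g) → STerm S ar) :
    (STerm.node g c).degree = 1 + ((List.ofFn c).map STerm.degree).sum := by
  simp [STerm.degree, List.map_ofFn, List.sum_ofFn]

lemma degree_nd (g : S) (cs : List (STerm S ar)) (h : cs.length = ar g) :
    (nd g cs).degree = 1 + (cs.map STerm.degree).sum := by
  unfold nd
  rw [degree_node, ofFn_getD _ _ h]

lemma degree_pos {t : STerm S ar} (h : t ≠ leaf) : 0 < t.degree := by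
  cases t with
  | leaf => exact absurd rfl h
  | node g c => rw [degree_node]; omega

lemma nd_ne (g : S) (cs : List (STerm S ar)) : nd g cs ≠ leaf := by
  unfold nd; simp

lemma graftRight_leaf (s : STerm S ar) : (leaf : STerm S ar).graftRight s = s := rfl

lemma graftRight_ne {t : STerm S ar} (h : t ≠ leaf) (s : STerm S ar) : t.graftRight s ≠ leaf := by
  cases t with
  | leaf => exact absurd rfl h
  | node g c => simp [graftRight]

lemma graftRight_ne' (t : STerm S ar) {s : STerm S ar} (h : s ≠ leaf) :
    t.graftRight s ≠ leaf := by
  cases t with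
  | leaf => exact h
  | node g c => simp [graftRight]

lemma graftRight_nd (g : S) (cs : List (STerm S ar)) (t s : STerm S ar)
    (h : (cs ++ [t]).length = ar g) :
    (nd g (cs ++ [t])).graftRight s = nd g (cs ++ [t.graftRight s]) := by
  unfold nd
  simp only [graftRight]
  congr 1
  funext i
  have hi := i.2
  simp at h
  by_cases hh : (i : ℕ) = cs.length
  · rw [if_pos (by omega)]
    simp [List.getD, hh]
  · rw [if_neg (by omega)]
    have : (i : ℕ) < cs.length := by omega
    simp [List.getD, List.getElem?_append_left this]

lemma degree_graftRight (hpos : ∀ g : S, 0 < ar g) (t s : STerm S ar) :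
    (t.graftRight s).degree = t.degree + s.degree := by
  induction t with
  | leaf => simp [graftRight, degree]
  | node g c ih =>
    simp only [graftRight, degree]
    have hk : ar g - 1 < ar g := by have := hpos g; omega
    have : ∀ i : Fin (ar g), (if (i : ℕ) = ar g - 1 then (c i).graftRight s else c i).degree
        = (c i).degree + if i = ⟨ar g - 1, hk⟩ then s.degree else 0 := by
      intro i
      by_cases h : (i : ℕ) = ar g - 1
      · simp [h, Fin.ext_iff, ih]
      · simp [h, Fin.ext_iff]
    simp only [this, Finset.sum_add_distrib, Finset.sum_ite_eq']
    simp
    omega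

lemma TermMove_ne {t t' : STerm S ar} (h : TermMove t t') : t ≠ leaf ∧ t' ≠ leaf := by
  cases h <;> simp

lemma TermMove_degree (hpos : ∀ g : S, 0 < ar g) {t t' : STerm S ar} (h : TermMove t t') :
    t'.degree = t.degree := by
  induction h with
  | here g c j j' hj hne =>
    obtain ⟨p, q, h1, h2⟩ := ofFn_split2 c j j' hj
    rw [degree_node, degree_node, h1, h2]
    simp [degree_graftRight hpos, degree]
    omega
  | child g c i t' h ih =>
    obtain ⟨p, q, h1, h2⟩ := ofFn_split1 c i
    rw [degree_node, degree_node, h1, h2]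
    simp [ih]

/-- Children list together with following trees, reading only the non-leaf entries. -/
def flat : List (STerm S ar) → List (STerm S ar) → List (STerm S ar)
  | [], r => r
  | STerm.leaf :: cs, r => flat cs r
  | STerm.node g c :: cs, r => STerm.node g c :: flat cs r

lemma flat_cons_ne {t : STerm S ar} (h : t ≠ leaf) (cs r : List (STerm S ar)) :
    flat (t :: cs) r = t :: flat cs r := by
  cases t with
  | leaf => exact absurd rfl h
  | node g c => rfl

/-- Partial sums of the degrees. -/
def K : ℕ → List (STerm S ar) → List ℕ
  | _, [] => []
  | o, c :: cs => (o + c.degree) :: K (o + c.degree) cs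

/-- Boundaries between trees. -/
def Bd : ℕ → List (STerm S ar) → Set ℕ
  | o, [] => {o}
  | o, t :: F => {o} ∪ Bd (o + t.degree) F

/-- Steps on states. -/
inductive St : List (STerm S ar) × List (STerm S ar) → List (STerm S ar) × List (STerm S ar) → Prop
  | inner (t t' : STerm S ar) (q r : List (STerm S ar)) : TermMove t t' → St (t :: q, r) (t' :: q, r)
  | shift (t t' : STerm S ar) (q r : List (STerm S ar)) : t' ≠ leaf →
      St (t :: t' :: q, r) (t.graftRight t' :: leaf :: q, r)
  | last (t t' : STerm S ar) (r : List (STerm S ar)) : t' ≠ leaf →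
      St ([t], t' :: r) ([t.graftRight t'], r)
  | rest (r r' : List (STerm S ar)) : ForestMove r r' → St ([], r) ([], r')
  | cons (c : STerm S ar) (q r q' r' : List (STerm S ar)) :
      St (q, r) (q', r') → St (c :: q, r) (c :: q', r')

lemma fm_cons (t : STerm S ar) {f f' : List (STerm S ar)} (h : ForestMove f f') :
    ForestMove (t :: f) (t :: f') := by
  cases h with
  | root pre a b post h => exact ForestMove.root (t :: pre) a b post h
  | tree pre a b post h => exact ForestMove.tree (t :: pre) a b post h

lemma ew_cons (t : STerm S ar) {f f' : List (STerm S ar)} (h : EWLe f f') :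
    EWLe (t :: f) (t :: f') := by
  induction h with
  | refl => exact Relation.ReflTransGen.refl
  | tail _ h ih => exact ih.tail (fm_cons t h)

/-- Inversion of forest moves. -/
lemma fm_inv {t : STerm S ar} {f x : List (STerm S ar)} (h : ForestMove (t :: f) x) :
    (∃ f', ForestMove f f' ∧ x = t :: f') ∨
    (∃ t', TermMove t t' ∧ x = t' :: f) ∨
    (∃ t' f', t' ≠ leaf ∧ f = t' :: f' ∧ x = t.graftRight t' :: f') := by
  generalize hy : t :: f = y at h
  cases h with
  | root pre a b post h =>
    cases pre with
    | nil =>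
      simp at hy
      obtain ⟨rfl, rfl⟩ := hy
      right; right
      exact ⟨b, post, h, rfl, rfl⟩
    | cons p pre =>
      simp at hy
      obtain ⟨rfl, rfl⟩ := hy
      left
      exact ⟨_, ForestMove.root pre a b post h, rfl⟩
  | tree pre a b post h =>
    cases pre with
    | nil =>
      simp at hy
      obtain ⟨rfl, rfl⟩ := hy
      right; left
      exact ⟨b, h, rfl⟩
    | cons p pre =>
      simp at hy
      obtain ⟨rfl, rfl⟩ := hy
      left
      exact ⟨_, ForestMove.tree pre a b post h, rfl⟩

lemma fm_nil {x : List (STerm S ar)} (h : ForestMove [] x) : False := by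
  generalize hy : ([] : List (STerm S ar)) = y at h
  cases h <;> simp at hy

lemma St_length {s s' : List (STerm S ar) × List (STerm S ar)} (h : St s s') :
    s'.1.length = s.1.length := by
  induction h <;> simp_all

lemma St_append (p : List (STerm S ar)) {q r q' r' : List (STerm S ar)} (h : St (q, r) (q', r')) :
    St (p ++ q, r) (p ++ q', r') := by
  induction p with
  | nil => exact h
  | cons c p ih => exact St.cons _ _ _ _ _ ih

/-- From states to forests. -/
lemma St_move {g : S} {s s' : List (STerm S ar) × List (STerm S ar)} (h : St s s') :
    ∀ p : List (STerm S ar), (p ++ s.1).length = ar g →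
      ForestMove (nd g (p ++ s.1) :: s.2) (nd g (p ++ s'.1) :: s'.2) := by
  induction h with
  | inner t t' q r h =>
    intro p hp
    refine ForestMove.tree [] _ _ r ?_
    dsimp only at *
    have hi : p.length < ar g := by simp at hp; omega
    have := TermMove.child g (fun i => (p ++ t :: q).getD (i : ℕ) STerm.leaf) ⟨p.length, hi⟩ t'
      (by simpa [List.getD] using h)
    rw [← nd_ofFn g, ← nd_ofFn g, ofFn_update, ofFn_getD _ _ hp] at this
    simpa using this
  | shift t t' q r h =>
    intro p hp
    refine ForestMove.tree [] _ _ r ?_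
    dsimp only at *
    have hi : p.length + 1 < ar g := by simp at hp; omega
    have := TermMove.here g (fun i => (p ++ t :: t' :: q).getD (i : ℕ) STerm.leaf)
      ⟨p.length, by omega⟩ ⟨p.length + 1, hi⟩ rfl
      (by simpa [List.getD] using h)
    rw [← nd_ofFn g, ← nd_ofFn g, ofFn_update, ofFn_update, ofFn_getD _ _ hp] at this
    simpa [List.getD, List.set_append] using this
  | last t t' r h =>
    intro p hp
    have := ForestMove.root [] (nd g (p ++ [t])) t' r h
    rw [graftRight_nd g p t t' hp] at this
    exact this
  | rest r r' h => intro p _; exact fm_cons _ h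
  | cons c q r q' r' h ih =>
    intro p hp
    have := ih (p ++ [c]) (by simpa using hp)
    simpa using this

/-- From forests to states. -/
lemma move_St (hpos : ∀ g : S, 0 < ar g) {g : S} {cs r x : List (STerm S ar)}
    (hl : cs.length = ar g) (hm : ForestMove (nd g cs :: r) x) :
    ∃ cs' r', x = nd g cs' :: r' ∧ St (cs, r) (cs', r') := by
  rcases fm_inv hm with ⟨f', h, rfl⟩ | ⟨t', h, rfl⟩ | ⟨t', f', h, rfl, rfl⟩
  · refine ⟨cs, f', rfl, ?_⟩
    have := St_append cs (St.rest _ _ h)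
    simpa using this
  · clear hm
    unfold nd at h
    have hcs := ofFn_getD _ _ hl
    generalize (fun i : Fin (ar g) => cs.getD (i : ℕ) STerm.leaf) = c at h hcs
    subst hcs
    cases h with
    | here _ _ j j' hj hne =>
      obtain ⟨p, q, h1, h2⟩ := ofFn_split2 c j j' hj
      refine ⟨_, r, by rw [← nd_ofFn], ?_⟩
      rw [h1, h2]
      exact St_append p (St.shift _ _ _ _ hne)
    | child _ _ i t' h =>
      obtain ⟨p, q, h1, h2⟩ := ofFn_split1 c i
      refine ⟨_, r, by rw [← nd_ofFn], ?_⟩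
      rw [h1, h2]
      exact St_append p (St.inner _ _ _ _ h)
  · have hne : cs ≠ [] := by
      rintro rfl
      have := hpos g
      simp at hl; omega
    obtain ⟨p, t, rfl⟩ : ∃ p t, cs = p ++ [t] := ⟨_, _, (List.dropLast_append_getLast hne).symm⟩
    refine ⟨p ++ [t.graftRight t'], f', ?_, ?_⟩
    · rw [graftRight_nd _ _ _ _ hl]
    · exact St_append p (St.last _ _ _ h)

end EW

namespace EW

open STerm

variable {S : Type} {ar : S → ℕ}

lemma forall₂_refl_le (l : List ℕ) : List.Forall₂ (· ≤ ·) l l := by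
  induction l with
  | nil => exact .nil
  | cons a l ih => exact .cons le_rfl ih

lemma forall₂_trans_le {a b c : List ℕ} (h : List.Forall₂ (· ≤ ·) a b)
    (h' : List.Forall₂ (· ≤ ·) b c) : List.Forall₂ (· ≤ ·) a c := by
  induction h generalizing c with
  | nil => cases h'; exact .nil
  | cons h _ ih =>
    cases h' with
    | cons h1 h2 => exact .cons (le_trans h h1) (ih h2)

lemma K_length (o : ℕ) (cs : List (STerm S ar)) : (K o cs).length = cs.length := by
  induction cs generalizing o with
  | nil => rfl
  | cons c cs ih => simp [K, ih]

lemma K_ge {o : ℕ} {cs : List (STerm S ar)} : ∀ k ∈ K o cs, o ≤ k := by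
  induction cs generalizing o with
  | nil => simp [K]
  | cons c cs ih =>
    intro k hk
    simp only [K, List.mem_cons] at hk
    rcases hk with rfl | hk
    · omega
    · have := ih k hk; omega

lemma K_mono {o o' : ℕ} (h : o ≤ o') (cs : List (STerm S ar)) :
    List.Forall₂ (· ≤ ·) (K o cs) (K o' cs) := by
  induction cs generalizing o o' with
  | nil => exact .nil
  | cons c cs ih => exact .cons (by omega) (ih (by omega))

lemma St_K (hpos : ∀ g : S, 0 < ar g) {s s' : List (STerm S ar) × List (STerm S ar)}
    (h : St s s') : ∀ o, List.Forall₂ (· ≤ ·) (K o s.1) (K o s'.1) := by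
  induction h with
  | inner t t' q r h =>
    intro o
    simp only [K, TermMove_degree hpos h]
    exact forall₂_refl_le _
  | shift t t' q r h =>
    intro o
    simp only [K, degree_graftRight hpos]
    refine .cons (by omega) (.cons (by omega) (K_mono (by omega) _))
  | last t t' r h =>
    intro o
    simp only [K, degree_graftRight hpos]
    exact .cons (by omega) .nil
  | rest r r' h => intro o; exact .nil
  | cons c q r q' r' h ih =>
    intro o
    exact .cons le_rfl (ih _)

lemma St_flat {s s' : List (STerm S ar) × List (STerm S ar)}
    (h : St s s') : EWLe (flat s.1 s.2) (flat s'.1 s'.2) := by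
  induction h with
  | inner t t' q r h =>
    dsimp only
    rw [flat_cons_ne (TermMove_ne h).1, flat_cons_ne (TermMove_ne h).2]
    exact .single (ForestMove.tree [] _ _ _ h)
  | shift t t' q r h =>
    dsimp only
    cases t with
    | leaf =>
      rw [graftRight_leaf, flat, flat_cons_ne h, flat_cons_ne h, flat]
      exact .refl
    | node g c =>
      have hne : STerm.node g c ≠ leaf := by simp
      rw [flat_cons_ne (graftRight_ne' _ h), flat_cons_ne hne, flat_cons_ne h, flat]
      exact .single (ForestMove.root [] _ _ _ h)
  | last t t' r h =>
    dsimp only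
    cases t with
    | leaf =>
      rw [graftRight_leaf, flat, flat_cons_ne h]
      exact .refl
    | node g c =>
      rw [flat_cons_ne (graftRight_ne' _ h), flat, flat, flat]
      exact .single (ForestMove.root [] _ _ _ h)
  | rest r r' h => exact .single h
  | cons c q r q' r' h ih =>
    dsimp only at *
    cases c with
    | leaf => exact ih
    | node g c => exact ew_cons _ ih

lemma Bd_self (o : ℕ) (F : List (STerm S ar)) : o ∈ Bd o F := by
  cases F <;> simp [Bd]

lemma Bd_ge {o b : ℕ} {F : List (STerm S ar)} (h : b ∈ Bd o F) : o ≤ b := by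
  induction F generalizing o with
  | nil => simp [Bd] at h; omega
  | cons t F ih =>
    simp only [Bd, Set.singleton_union, Set.mem_insert_iff] at h
    rcases h with rfl | h
    · exact le_rfl
    · have := ih h; omega

lemma mem_Bd_cons {o b : ℕ} {t : STerm S ar} {F : List (STerm S ar)} :
    b ∈ Bd o (t :: F) ↔ b = o ∨ b ∈ Bd (o + t.degree) F := by
  simp [Bd]

lemma Bd_gt {o b : ℕ} {t : STerm S ar} {F : List (STerm S ar)} (h : b ∈ Bd o (t :: F))
    (hb : o < b) : o + t.degree ≤ b := by
  rcases mem_Bd_cons.1 h with rfl | h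
  · omega
  · exact Bd_ge h

lemma fm_Bd (hpos : ∀ g : S, 0 < ar g) {F F' : List (STerm S ar)} (hm : ForestMove F F') (o : ℕ) :
    Bd o F' ⊆ Bd o F := by
  induction F generalizing o F' with
  | nil => exact (fm_nil hm).elim
  | cons t F ih =>
    rcases fm_inv hm with ⟨f', h, rfl⟩ | ⟨t', h, rfl⟩ | ⟨t', f', h, rfl, rfl⟩
    · intro b hb
      rw [mem_Bd_cons] at *
      exact hb.imp_right fun hb => ih h _ hb
    · simp only [Bd, TermMove_degree hpos h]
      exact subset_rfl
    · intro b hb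
      simp only [mem_Bd_cons, degree_graftRight hpos] at *
      rw [← add_assoc] at hb
      tauto

lemma ew_Bd (hpos : ∀ g : S, 0 < ar g) {F F' : List (STerm S ar)} (h : EWLe F F') (o : ℕ) :
    Bd o F' ⊆ Bd o F := by
  induction h with
  | refl => exact subset_rfl
  | tail _ h ih => exact (fm_Bd hpos h o).trans ih

lemma Bd_le {o b : ℕ} {F : List (STerm S ar)} (h : b ∈ Bd o F) : b ≤ o + forestDeg F := by
  induction F generalizing o with
  | nil => simp [Bd] at h; omega
  | cons t F ih =>
    simp only [forestDeg, List.map_cons, List.sum_cons] at *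
    rcases mem_Bd_cons.1 h with rfl | h
    · omega
    · have := ih h; omega

lemma Bd_top (o : ℕ) (F : List (STerm S ar)) : o + forestDeg F ∈ Bd o F := by
  induction F generalizing o with
  | nil => simp [Bd, forestDeg]
  | cons t F ih =>
    rw [mem_Bd_cons]
    right
    have := ih (o + t.degree)
    simpa [forestDeg, add_assoc] using this

/-- Chains of consecutive boundaries. -/
def Chain (B : Set ℕ) : ℕ → List ℕ → Prop
  | _, [] => True
  | o, k :: ks => k ∈ B ∧ o ≤ k ∧ (∀ b ∈ B, o < b → k ≤ b) ∧ Chain B k ks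

lemma Chain_congr {B B' : Set ℕ} {o : ℕ} (h : ∀ b, o ≤ b → (b ∈ B ↔ b ∈ B')) {ks : List ℕ}
    (hc : Chain B o ks) : Chain B' o ks := by
  induction ks generalizing o with
  | nil => trivial
  | cons k ks ih =>
    obtain ⟨h1, h2, h3, h4⟩ := hc
    refine ⟨(h k h2).1 h1, h2, fun b hb hob => h3 b ((h b hob.le).2 hb) hob, ?_⟩
    exact ih (fun b hb => h b (h2.trans hb)) h4

lemma Chain_mem {B : Set ℕ} {o : ℕ} {ks : List ℕ} (hc : Chain B o ks) : ∀ k ∈ ks, k ∈ B := by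
  induction ks generalizing o with
  | nil => simp
  | cons k ks ih =>
    obtain ⟨h1, h2, h3, h4⟩ := hc
    intro x hx
    rcases List.mem_cons.1 hx with rfl | hx
    · exact h1
    · exact ih h4 x hx

lemma Chain_K (o : ℕ) (cs r : List (STerm S ar)) : Chain (Bd o (flat cs r)) o (K o cs) := by
  induction cs generalizing o with
  | nil => trivial
  | cons c cs ih =>
    cases c with
    | leaf => exact ⟨Bd_self _ _, by omega, fun b _ h => h.le, ih _⟩
    | node g c =>
      have hne : STerm.node g c ≠ leaf := by simp
      generalize STerm.node g c = t at *
      rw [flat_cons_ne hne]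
      have hd := degree_pos hne
      refine ⟨mem_Bd_cons.2 (.inr (Bd_self _ _)), by omega, fun b hb h => Bd_gt hb h, ?_⟩
      refine Chain_congr ?_ (ih _)
      intro b hb
      rw [mem_Bd_cons]
      constructor
      · exact .inr
      · rintro (rfl | h)
        · omega
        · exact h

lemma Chain_exists {F : List (STerm S ar)} (hF : IsReducedF F) {o : ℕ} {ks : List ℕ}
    (hc : Chain (Bd o F) o ks) : ∃ cs r, flat cs r = F ∧ K o cs = ks := by
  induction ks generalizing o F with
  | nil => exact ⟨[], F, rfl, rfl⟩
  | cons k ks ih =>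
    obtain ⟨h1, h2, h3, h4⟩ := hc
    rcases h2.eq_or_lt with rfl | hlt
    · obtain ⟨cs, r, e1, e2⟩ := ih hF h4
      exact ⟨leaf :: cs, r, e1, by simp [K, degree, e2]⟩
    · cases F with
      | nil => simp [Bd] at h1; omega
      | cons t F =>
        have hne : t ≠ leaf := hF t (by simp)
        have hd := degree_pos hne
        have e : k = o + t.degree :=
          le_antisymm (h3 _ (mem_Bd_cons.2 (.inr (Bd_self _ _))) (by omega)) (Bd_gt h1 hlt)
        subst e
        obtain ⟨cs, r, e1, e2⟩ := ih (F := F) (o := o + t.degree)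
          (fun x hx => hF x (by simp [hx]))
          (Chain_congr (fun b hb => by
            rw [mem_Bd_cons]
            constructor
            · rintro (rfl | h)
              · omega
              · exact h
            · exact .inr) h4)
        exact ⟨t :: cs, r, by rw [flat_cons_ne hne, e1], by simp [K, e2]⟩

/-- Being raised at most to the next element of `T`. -/
def Up (T : Set ℕ) (k k' : ℕ) : Prop := ∀ b ∈ T, k ≤ b → k' ≤ b

lemma Up_extend {T T' : Set ℕ} {A B : List ℕ} (h : List.Forall₂ (Up T) A B)
    (h' : ∀ a ∈ A, ∀ b ∈ T', a ≤ b → b ∈ T) : List.Forall₂ (Up T') A B := by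
  induction h with
  | nil => exact .nil
  | cons h _ ih =>
    refine .cons (fun b hb hab => h b (h' _ (by simp) b hb hab) hab) (ih ?_)
    intro a ha
    exact h' a (by simp [ha])

lemma Up_le {T : Set ℕ} {A B C : List ℕ} (h : List.Forall₂ (Up T) A B)
    (h' : List.Forall₂ (· ≤ ·) A C) (hC : ∀ c ∈ C, c ∈ T) : List.Forall₂ (· ≤ ·) B C := by
  induction h generalizing C with
  | nil => cases h'; exact .nil
  | cons h _ ih =>
    cases h' with
    | cons h1 h2 =>
      exact .cons (h _ (hC _ (by simp)) h1) (ih h2 (fun c hc => hC c (by simp [hc])))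

lemma Up_refl (T : Set ℕ) (A : List ℕ) : List.Forall₂ (Up T) A A := by
  induction A with
  | nil => exact .nil
  | cons a l ih => exact .cons (fun _ _ h => h) ih

/-- Reflexive transitive closure of state steps. -/
def Sts (s s' : List (STerm S ar) × List (STerm S ar)) : Prop := Relation.ReflTransGen St s s'

lemma Sts_cons (c : STerm S ar) {q r q' r' : List (STerm S ar)} (h : Sts (q, r) (q', r')) :
    Sts (c :: q, r) (c :: q', r') := by
  generalize hs : (q, r) = s at h
  generalize hs' : (q', r') = s' at h
  unfold Sts at h
  induction h generalizing q' r' with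
  | refl =>
    subst hs
    injection hs' with e1 e2
    subst e1 e2
    exact .refl
  | @tail b c' _ h ih =>
    subst hs'
    exact (ih (q' := b.1) (r' := b.2) rfl).tail (St.cons c _ _ _ _ h)

lemma bring {cs r F : List (STerm S ar)} {t : STerm S ar} (ht : t ≠ leaf) (hcs : cs ≠ [])
    (h : flat cs r = t :: F) (o : ℕ) :
    ∃ cs' r', Sts (cs, r) (t :: cs', r') ∧ flat cs' r' = F ∧
      List.Forall₂ (Up {b | o + t.degree ≤ b}) (K o cs) (K o (t :: cs')) := by
  induction cs with
  | nil => exact absurd rfl hcs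
  | cons c cs ih =>
    cases c with
    | node g c =>
      rw [flat] at h
      injection h with h1 h2
      subst h1
      exact ⟨cs, r, .refl, h2, Up_refl _ _⟩
    | leaf =>
      rw [flat] at h
      cases cs with
      | nil =>
        rw [flat] at h
        subst h
        refine ⟨[], F, .single (St.last _ _ _ ht), rfl, ?_⟩
        exact .cons (fun b hb _ => hb) .nil
      | cons c cs =>
        obtain ⟨cs', r', h1, h2, h3⟩ := ih (by simp) h
        refine ⟨leaf :: cs', r', (Sts_cons leaf h1).tail (St.shift _ _ _ _ ht), h2, ?_⟩
        exact .cons (fun b hb _ => hb) h3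

lemma same_flat {cs r cs' r' : List (STerm S ar)} {o : ℕ} (hf : flat cs r = flat cs' r')
    (hK : List.Forall₂ (· ≤ ·) (K o cs) (K o cs')) : Sts (cs, r) (cs', r') := by
  induction cs' generalizing cs r o with
  | nil =>
    cases cs with
    | nil =>
      have : r = r' := hf
      subst this
      exact .refl
    | cons c cs => simp [K] at hK
  | cons c' cs' ih =>
    cases cs with
    | nil => simp [K] at hK
    | cons c cs =>
      cases c' with
      | leaf =>
        cases c with
        | leaf =>
          simp only [K] at hK
          exact Sts_cons _ (ih hf (List.forall₂_cons.1 hK).2)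
        | node g c =>
          have := degree_pos (t := STerm.node g c) (by simp)
          have h1 := (List.forall₂_cons.1 hK).1
          simp only [degree] at *
          omega
      | node g c' =>
        have hne : STerm.node g c' ≠ leaf := by simp
        generalize STerm.node g c' = t at *
        rw [flat_cons_ne hne] at hf
        obtain ⟨cs1, r1, h1, h2, h3⟩ := bring hne (by simp) hf o
        have h4 := Up_le h3 hK (by
          intro k hk
          simp only [K, List.mem_cons] at hk
          rcases hk with rfl | hk
          · simp
          · exact K_ge k hk)
        exact h1.trans (Sts_cons _ (ih h2 (List.forall₂_cons.1 h4).2))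

lemma lift_step (hpos : ∀ g : S, 0 < ar g) {cs r F : List (STerm S ar)}
    (hm : ForestMove (flat cs r) F) (o : ℕ) :
    ∃ cs' r', flat cs' r' = F ∧ Sts (cs, r) (cs', r') ∧
      List.Forall₂ (Up (Bd o F)) (K o cs) (K o cs') := by
  induction cs generalizing F o with
  | nil => exact ⟨[], F, rfl, .single (St.rest _ _ hm), .nil⟩
  | cons c cs ih =>
    cases c with
    | leaf =>
      obtain ⟨cs', r', h1, h2, h3⟩ := ih hm o
      exact ⟨leaf :: cs', r', h1, Sts_cons _ h2, .cons (fun _ _ h => h) h3⟩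
    | node g c =>
      have hne : STerm.node g c ≠ leaf := by simp
      generalize STerm.node g c = t at *
      have hd := degree_pos hne
      rw [flat_cons_ne hne] at hm
      rcases fm_inv hm with ⟨F', h, rfl⟩ | ⟨t', h, rfl⟩ | ⟨t', F', h, hF, rfl⟩
      · obtain ⟨cs', r', h1, h2, h3⟩ := ih h (o + t.degree)
        refine ⟨t :: cs', r', by rw [flat_cons_ne hne, h1], Sts_cons _ h2,
          .cons (fun _ _ h => h) (Up_extend h3 ?_)⟩
        intro a ha b hb hab
        have := K_ge a ha
        rcases mem_Bd_cons.1 hb with rfl | h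
        · omega
        · exact h
      · refine ⟨t' :: cs, r, flat_cons_ne (TermMove_ne h).2 _ _, .single (St.inner _ _ _ _ h), ?_⟩
        simp only [K, TermMove_degree hpos h]
        exact Up_refl _ _
      · have hg := degree_graftRight hpos t t'
        have key : ∀ a b, o + t.degree ≤ a → b ∈ Bd o (t.graftRight t' :: F') → a ≤ b →
            o + t.degree + t'.degree ≤ b := by
          intro a b ha hb hab
          have := Bd_gt hb (by omega)
          omega
        cases cs with
        | nil =>
          rw [flat] at hF
          subst hF
          refine ⟨[t.graftRight t'], F', flat_cons_ne (graftRight_ne hne _) _ _,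
            .single (St.last _ _ _ h), .cons ?_ .nil⟩
          intro b hb hab
          have := key _ b le_rfl hb hab
          omega
        | cons c2 cs2 =>
          obtain ⟨cs', r', h1, h2, h3⟩ := bring h (by simp) hF (o + t.degree)
          refine ⟨t.graftRight t' :: leaf :: cs', r', ?_,
            (Sts_cons t h1).tail (St.shift _ _ _ _ h), ?_⟩
          · rw [flat_cons_ne (graftRight_ne hne _), flat, h2]
          · have h4 := Up_extend h3 (T' := Bd o (t.graftRight t' :: F')) (by
              intro a ha b hb hab
              exact key a b (K_ge a ha) hb hab)
            have e : K o (t.graftRight t' :: leaf :: cs') =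
              (o + t.degree + t'.degree) :: K (o + t.degree) (t' :: cs') := by
              simp only [K, hg, degree, add_assoc, add_zero]
            rw [e]
            refine .cons ?_ h4
            intro b hb hab
            exact key _ b le_rfl hb hab

lemma lift_le (hpos : ∀ g : S, 0 < ar g) {cs r cs' r' : List (STerm S ar)} {o : ℕ}
    (h : EWLe (flat cs r) (flat cs' r'))
    (hK : List.Forall₂ (· ≤ ·) (K o cs) (K o cs')) : Sts (cs, r) (cs', r') := by
  generalize hF : flat cs r = F at h
  unfold EWLe at h
  induction h using Relation.ReflTransGen.head_induction_on generalizing cs r with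
  | refl => exact same_flat hF hK
  | head h1 h2 ih =>
    subst hF
    obtain ⟨cs1, r1, e1, e2, e3⟩ := lift_step hpos h1 o
    refine e2.trans (ih (Up_le e3 hK ?_) e1)
    intro c hc
    exact ew_Bd hpos h2 o (Chain_mem (Chain_K o cs' r') c hc)

lemma Sts_ew {g : S} {s s' : List (STerm S ar) × List (STerm S ar)} (h : Sts s s')
    (hl : s.1.length = ar g) : s'.1.length = ar g ∧ EWLe (nd g s.1 :: s.2) (nd g s'.1 :: s'.2) := by
  induction h with
  | refl => exact ⟨hl, .refl⟩
  | tail _ h ih =>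
    refine ⟨(St_length h).trans ih.1, ih.2.tail ?_⟩
    exact St_move h [] ih.1

lemma ew_of (hpos : ∀ g : S, 0 < ar g) {g : S} {cs r cs' r' : List (STerm S ar)}
    (hl : cs.length = ar g)
    (h : EWLe (flat cs r) (flat cs' r'))
    (hK : List.Forall₂ (· ≤ ·) (K 0 cs) (K 0 cs')) : EWLe (nd g cs :: r) (nd g cs' :: r') :=
  (Sts_ew (lift_le hpos h hK) hl).2

lemma of_ew (hpos : ∀ g : S, 0 < ar g) {g : S} {cs r x : List (STerm S ar)}
    (hl : cs.length = ar g) (h : EWLe (nd g cs :: r) x) :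
    ∃ cs' r', x = nd g cs' :: r' ∧ cs'.length = ar g ∧ EWLe (flat cs r) (flat cs' r') ∧
      List.Forall₂ (· ≤ ·) (K 0 cs) (K 0 cs') := by
  induction h with
  | refl => exact ⟨cs, r, rfl, hl, .refl, forall₂_refl_le _⟩
  | tail _ h ih =>
    obtain ⟨cs', r', rfl, h1, h2, h3⟩ := ih
    obtain ⟨cs2, r2, rfl, h4⟩ := move_St hpos h1 h
    exact ⟨cs2, r2, rfl, (St_length h4).trans h1, h2.trans (St_flat h4),
      forall₂_trans_le h3 (St_K hpos h4 0)⟩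

lemma nd_inj {g : S} {cs cs' : List (STerm S ar)} (h : cs.length = ar g) (h' : cs'.length = ar g)
    (e : nd g cs = nd g cs') : cs = cs' := by
  unfold nd at e
  injection e with _ e
  rw [← ofFn_getD _ _ h, ← ofFn_getD _ _ h', e]

lemma of_ew' (hpos : ∀ g : S, 0 < ar g) {g : S} {cs r cs' r' : List (STerm S ar)}
    (hl : cs.length = ar g) (hl' : cs'.length = ar g) (h : EWLe (nd g cs :: r) (nd g cs' :: r')) :
    EWLe (flat cs r) (flat cs' r') ∧ List.Forall₂ (· ≤ ·) (K 0 cs) (K 0 cs') := by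
  obtain ⟨cs2, r2, e, h1, h2, h3⟩ := of_ew hpos hl h
  injection e with e1 e2
  have := nd_inj hl' h1 e1
  subst this e2
  exact ⟨h2, h3⟩

/-- Forests of decoration word `w`. -/
def IsW : List S → List (STerm S ar) → Prop
  | [], f => f = []
  | g :: w, f => ∃ cs r, f = nd g cs :: r ∧ cs.length = ar g ∧ IsW w (flat cs r)

lemma red_of_flat {cs r : List (STerm S ar)} (h : IsReducedF (flat cs r)) : IsReducedF r := by
  induction cs with
  | nil => exact h
  | cons c cs ih =>
    cases c with
    | leaf => exact ih h
    | node g c =>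
      apply ih
      intro t ht
      exact h t (by rw [flat]; simp [ht])

lemma IsW_red {w : List S} {f : List (STerm S ar)} (h : IsW w f) : IsReducedF f := by
  induction w generalizing f with
  | nil => subst h; intro t ht; simp at ht
  | cons g w ih =>
    obtain ⟨cs, r, rfl, h1, h2⟩ := h
    intro t ht
    rcases List.mem_cons.1 ht with rfl | ht
    · exact nd_ne _ _
    · exact red_of_flat (ih h2) t ht

lemma forestDeg_flat (cs r : List (STerm S ar)) :
    forestDeg (flat cs r) = (cs.map degree).sum + forestDeg r := by
  induction cs with
  | nil => simp [flat]
  | cons c cs ih =>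
    cases c with
    | leaf => simpa [flat, degree] using ih
    | node g c => simp [flat, forestDeg] at *; omega

lemma IsW_deg {w : List S} {f : List (STerm S ar)} (h : IsW w f) : forestDeg f = w.length := by
  induction w generalizing f with
  | nil => subst h; rfl
  | cons g w ih =>
    obtain ⟨cs, r, rfl, h1, h2⟩ := h
    have h3 := ih h2
    rw [forestDeg_flat] at h3
    simp [forestDeg, degree_nd g cs h1] at *
    omega

lemma IsW_ew (hpos : ∀ g : S, 0 < ar g) {w : List S} {f x : List (STerm S ar)} (h : IsW w f)
    (hx : EWLe f x) : IsW w x := by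
  induction w generalizing f x with
  | nil =>
    subst h
    induction hx with
    | refl => rfl
    | tail _ h ih => subst ih; exact (fm_nil h).elim
  | cons g w ih =>
    obtain ⟨cs, r, rfl, h1, h2⟩ := h
    obtain ⟨cs', r', rfl, h3, h4, h5⟩ := of_ew hpos h1 hx
    exact ⟨cs', r', rfl, h3, ih h2 h4⟩

lemma flat_replicate (n : ℕ) (r : List (STerm S ar)) : flat (List.replicate n leaf) r = r := by
  induction n with
  | zero => rfl
  | succ n ih => rw [List.replicate_succ, flat, ih]

lemma iotaT_eq (g : S) : (iotaT g : STerm S ar) = nd g (List.replicate (ar g) leaf) := by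
  unfold iotaT nd
  congr 1
  funext i
  simp [List.getD]

lemma IsW_fmin (w : List S) : IsW w (fmin (ar := ar) w) := by
  induction w with
  | nil => rfl
  | cons g w ih =>
    refine ⟨List.replicate (ar g) leaf, fmin w, ?_, by simp, ?_⟩
    · simp [fmin, iotaT_eq]
    · rwa [flat_replicate]

lemma K_replicate (o n : ℕ) :
    K o (List.replicate n (leaf : STerm S ar)) = List.replicate n o := by
  induction n with
  | zero => rfl
  | succ n ih => simp [List.replicate_succ, K, degree, ih]

lemma rep_le {o : ℕ} {l : List ℕ} (h : ∀ k ∈ l, o ≤ k) :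
    List.Forall₂ (· ≤ ·) (List.replicate l.length o) l := by
  induction l with
  | nil => exact .nil
  | cons a l ih => exact .cons (h a (by simp)) (ih fun k hk => h k (by simp [hk]))

lemma le_rep {o : ℕ} {l : List ℕ} (h : ∀ k ∈ l, k ≤ o) :
    List.Forall₂ (· ≤ ·) l (List.replicate l.length o) := by
  induction l with
  | nil => exact .nil
  | cons a l ih => exact .cons (h a (by simp)) (ih fun k hk => h k (by simp [hk]))

lemma fmin_le (hpos : ∀ g : S, 0 < ar g) {w : List S} {f : List (STerm S ar)} (h : IsW w f) :
    EWLe (fmin w) f := by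
  induction w generalizing f with
  | nil => subst h; exact .refl
  | cons g w ih =>
    obtain ⟨cs, r, rfl, h1, h2⟩ := h
    have := ew_of hpos (g := g) (cs := List.replicate (ar g) leaf) (r := fmin w) (cs' := cs)
      (r' := r) (by simp) (by rw [flat_replicate]; exact ih h2)
      (by
        rw [K_replicate, ← h1, ← K_length 0 cs]
        exact rep_le K_ge)
    simpa [fmin, iotaT_eq] using this

/-- The left comb. -/
def comb (w : List S) : STerm S ar := (w.map iotaT).foldl STerm.graftFirst leaf

lemma graftFirst_nd (g : S) (t s : STerm S ar) (cs : List (STerm S ar)) :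
    (nd g (t :: cs)).graftFirst s = nd g (t.graftFirst s :: cs) := by
  unfold nd
  simp only [graftFirst]
  congr 1
  funext i
  by_cases h : (i : ℕ) = 0
  · simp [h]
  · obtain ⟨k, hk⟩ := Nat.exists_eq_succ_of_ne_zero h
    simp [hk]

lemma foldl_nd (g : S) (t : STerm S ar) (cs L : List (STerm S ar)) :
    L.foldl STerm.graftFirst (nd g (t :: cs)) = nd g (L.foldl STerm.graftFirst t :: cs) := by
  induction L generalizing t with
  | nil => rfl
  | cons a L ih => simp [graftFirst_nd, ih]

lemma fmax_cons (hpos : ∀ g : S, 0 < ar g) (g : S) (w : List S) :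
    fmax (ar := ar) (g :: w) = [nd g (comb w :: List.replicate (ar g - 1) leaf)] := by
  have : ar g = (ar g - 1) + 1 := by have := hpos g; omega
  rw [fmax, iotaT_eq]
  conv_lhs => rw [this, List.replicate_succ]
  rw [foldl_nd]
  rfl

lemma flat_comb (hpos : ∀ g : S, 0 < ar g) (w : List S) (n : ℕ) :
    flat (comb (ar := ar) w :: List.replicate n leaf) [] = fmax w := by
  cases w with
  | nil => simp [comb, flat, flat_replicate, fmax]
  | cons g w =>
    have h : comb (ar := ar) (g :: w) = nd g (comb w :: List.replicate (ar g - 1) leaf) := by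
      have := fmax_cons hpos g w
      rw [fmax] at this
      injection this
    rw [fmax_cons hpos, h, flat_cons_ne (nd_ne _ _), flat_replicate]

lemma IsW_fmax (hpos : ∀ g : S, 0 < ar g) (w : List S) : IsW w (fmax (ar := ar) w) := by
  induction w with
  | nil => rfl
  | cons g w ih =>
    refine ⟨_, _, fmax_cons hpos g w, ?_, ?_⟩
    · have := hpos g
      simp; omega
    · rwa [flat_comb hpos]

lemma le_fmax (hpos : ∀ g : S, 0 < ar g) {w : List S} {f : List (STerm S ar)} (h : IsW w f) :
    EWLe f (fmax w) := by
  induction w generalizing f with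
  | nil => subst h; exact .refl
  | cons g w ih =>
    obtain ⟨cs, r, rfl, h1, h2⟩ := h
    rw [fmax_cons hpos]
    refine ew_of hpos h1 (by rw [flat_comb hpos]; exact ih h2) ?_
    have hd : (comb (ar := ar) w).degree = w.length := by
      have h3 := IsW_deg (IsW_fmax hpos w)
      rw [← flat_comb hpos w 0, forestDeg_flat] at h3
      simpa [forestDeg] using h3
    have e : K 0 (comb (ar := ar) w :: List.replicate (ar g - 1) leaf) =
        List.replicate (K 0 cs).length w.length := by
      have : ar g = (ar g - 1) + 1 := by have := hpos g; omega
      rw [K_length, h1]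
      conv_rhs => rw [this, List.replicate_succ]
      simp [K, K_replicate, hd]
    rw [e]
    apply le_rep
    intro k hk
    have := Bd_le (Chain_mem (Chain_K 0 cs r) k hk)
    rw [IsW_deg h2] at this
    omega

lemma exists_succ {B : Set ℕ} {o m : ℕ} (hm : m ∈ B) (h : o < m) :
    ∃ k ∈ B, o < k ∧ ∀ b ∈ B, o < b → k ≤ b := by
  classical
  have hex : ∃ k, k ∈ B ∧ o < k := ⟨m, hm, h⟩
  exact ⟨Nat.find hex, (Nat.find_spec hex).1, (Nat.find_spec hex).2,
    fun b hb hob => Nat.find_min' hex ⟨hb, hob⟩⟩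

lemma join_chain {B B1 B2 : Set ℕ} (hB1 : B ⊆ B1) (hB2 : B ⊆ B2) {N : ℕ} (hN : N ∈ B)
    {ks1 ks2 : List ℕ} (hlen : ks1.length = ks2.length) {o o1 o2 : ℕ}
    (hc1 : Chain B1 o1 ks1) (hc2 : Chain B2 o2 ks2) (ho1 : o1 ≤ o) (ho2 : o2 ≤ o) (ho : o ∈ B)
    (hN1 : ∀ k ∈ ks1, k ≤ N) (hN2 : ∀ k ∈ ks2, k ≤ N) :
    ∃ ks, Chain B o ks ∧ List.Forall₂ (· ≤ ·) ks1 ks ∧ List.Forall₂ (· ≤ ·) ks2 ks ∧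
      ∀ (G : Set ℕ) (o' : ℕ) (ls : List ℕ), G ⊆ B → o ≤ o' → Chain G o' ls →
        List.Forall₂ (· ≤ ·) ks1 ls → List.Forall₂ (· ≤ ·) ks2 ls →
        List.Forall₂ (· ≤ ·) ks ls := by
  induction ks1 generalizing ks2 o o1 o2 with
  | nil =>
    cases ks2 with
    | nil => exact ⟨[], trivial, .nil, .nil, fun G o' ls _ _ _ h _ => h⟩
    | cons _ _ => simp at hlen
  | cons k1 ks1 ih =>
    cases ks2 with
    | nil => simp at hlen
    | cons k2 ks2 =>
      obtain ⟨a1, a2, a3, a4⟩ := hc1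
      obtain ⟨b1, b2, b3, b4⟩ := hc2
      obtain ⟨k, hk, hok, hs, h1, h2, hleast⟩ : ∃ k ∈ B, o ≤ k ∧ (∀ b ∈ B, o < b → k ≤ b) ∧
          k1 ≤ k ∧ k2 ≤ k ∧ (∀ l ∈ B, o ≤ l → k1 ≤ l → k2 ≤ l → k ≤ l) := by
        by_cases hm : k1 ≤ o ∧ k2 ≤ o
        · exact ⟨o, ho, le_rfl, fun b _ h => h.le, hm.1, hm.2, fun l _ h _ _ => h⟩
        · have hoN : o < N := by
            have := hN1 k1 (by simp)
            have := hN2 k2 (by simp)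
            omega
          obtain ⟨k, e1, e2, e3⟩ := exists_succ hN hoN
          refine ⟨k, e1, e2.le, e3, a3 k (hB1 e1) (by omega), b3 k (hB2 e1) (by omega), ?_⟩
          intro l hl _ h1 h2
          exact e3 l hl (by omega)
      obtain ⟨ks, c1, c2, c3, c4⟩ := ih (ks2 := ks2) (by simpa using hlen) a4 b4 h1 h2 hk
        (fun k hk => hN1 k (by simp [hk])) (fun k hk => hN2 k (by simp [hk]))
      refine ⟨k :: ks, ⟨hk, hok, hs, c1⟩, .cons h1 c2, .cons h2 c3, ?_⟩
      intro G o' ls hG ho' hc hl1 hl2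
      cases hl1 with
      | cons u1 u2 =>
        cases hl2 with
        | cons v1 v2 =>
          obtain ⟨d1, d2, d3, d4⟩ := hc
          have hkl := hleast _ (hG d1) (ho'.trans d2) u1 v1
          exact .cons hkl (c4 G _ _ hG hkl d4 u2 v2)

lemma meet_chain {B B1 B2 : Set ℕ} (hB1 : B1 ⊆ B) (hB2 : B2 ⊆ B)
    {ks1 ks2 : List ℕ} (hlen : ks1.length = ks2.length) {o o1 o2 : ℕ}
    (hc1 : Chain B1 o1 ks1) (hc2 : Chain B2 o2 ks2) (ho1 : o ≤ o1) (ho2 : o ≤ o2) (ho : o ∈ B) :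
    ∃ ks, Chain B o ks ∧ List.Forall₂ (· ≤ ·) ks ks1 ∧ List.Forall₂ (· ≤ ·) ks ks2 ∧
      ∀ (G : Set ℕ) (o' : ℕ) (ls : List ℕ), B ⊆ G → o' ≤ o → Chain G o' ls →
        List.Forall₂ (· ≤ ·) ls ks1 → List.Forall₂ (· ≤ ·) ls ks2 →
        List.Forall₂ (· ≤ ·) ls ks := by
  induction ks1 generalizing ks2 o o1 o2 with
  | nil =>
    cases ks2 with
    | nil => exact ⟨[], trivial, .nil, .nil, fun G o' ls _ _ _ h _ => h⟩
    | cons _ _ => simp at hlen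
  | cons k1 ks1 ih =>
    cases ks2 with
    | nil => simp at hlen
    | cons k2 ks2 =>
      obtain ⟨a1, a2, a3, a4⟩ := hc1
      obtain ⟨b1, b2, b3, b4⟩ := hc2
      obtain ⟨k, hk, hok, hs, h1, h2, hleast⟩ : ∃ k ∈ B, o ≤ k ∧ (∀ b ∈ B, o < b → k ≤ b) ∧
          k ≤ k1 ∧ k ≤ k2 ∧ (k = k1 ∨ k = k2 ∨ o < k) := by
        by_cases hm : k1 ≤ o ∨ k2 ≤ o
        · exact ⟨o, ho, le_rfl, fun b _ h => h.le, by omega, by omega, by omega⟩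
        · obtain ⟨k, e1, e2, e3⟩ := exists_succ (hB1 a1) (show o < k1 by omega)
          exact ⟨k, e1, e2.le, e3, e3 _ (hB1 a1) (by omega), e3 _ (hB2 b1) (by omega),
            .inr (.inr e2)⟩
      obtain ⟨ks, c1, c2, c3, c4⟩ := ih (ks2 := ks2) (by simpa using hlen) a4 b4 h1 h2 hk
      refine ⟨k :: ks, ⟨hk, hok, hs, c1⟩, .cons h1 c2, .cons h2 c3, ?_⟩
      intro G o' ls hG ho' hc hl1 hl2
      cases hl1 with
      | @cons l _ _ _ u1 u2 =>
        cases hl2 with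
        | cons v1 v2 =>
          obtain ⟨d1, d2, d3, d4⟩ := hc
          have hkl : l ≤ k := by
            rcases hleast with rfl | rfl | h
            · exact u1
            · exact v1
            · exact d3 k (hG hk) (by omega)
          exact .cons hkl (c4 G _ _ hG hkl d4 u2 v2)

lemma meet_exists (hpos : ∀ g : S, 0 < ar g) {w : List S} {f1 f2 : List (STerm S ar)}
    (h1 : IsW w f1) (h2 : IsW w f2) :
    ∃ m, IsW w m ∧ EWLe m f1 ∧ EWLe m f2 ∧ ∀ x, IsW w x → EWLe x f1 → EWLe x f2 → EWLe x m := by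
  induction w generalizing f1 f2 with
  | nil =>
    subst h1 h2
    refine ⟨[], rfl, .refl, .refl, ?_⟩
    intro x hx h _
    exact h
  | cons g w ih =>
    obtain ⟨cs1, r1, rfl, l1, w1⟩ := h1
    obtain ⟨cs2, r2, rfl, l2, w2⟩ := h2
    obtain ⟨F, hF, e1, e2, e3⟩ := ih w1 w2
    obtain ⟨ks, c1, c2, c3, c4⟩ := meet_chain (ew_Bd hpos e1 0) (ew_Bd hpos e2 0)
      (by rw [K_length, K_length, l1, l2]) (Chain_K 0 cs1 r1) (Chain_K 0 cs2 r2) le_rfl le_rfl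
      (Bd_self 0 F)
    obtain ⟨cs, r, rfl, rfl⟩ := Chain_exists (IsW_red hF) c1
    have l : cs.length = ar g := by
      have := c2.length_eq
      rw [K_length, K_length] at this
      omega
    refine ⟨nd g cs :: r, ⟨cs, r, rfl, l, hF⟩, ew_of hpos l e1 c2, ew_of hpos l e2 c3, ?_⟩
    rintro x ⟨cs', r', rfl, l', w'⟩ hx1 hx2
    obtain ⟨p1, q1⟩ := of_ew' hpos l' l1 hx1
    obtain ⟨p2, q2⟩ := of_ew' hpos l' l2 hx2
    have p := e3 _ w' p1 p2
    exact ew_of hpos l' p (c4 _ 0 _ (ew_Bd hpos p 0) le_rfl (Chain_K 0 cs' r') q1 q2)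

lemma join_exists (hpos : ∀ g : S, 0 < ar g) {w : List S} {f1 f2 : List (STerm S ar)}
    (h1 : IsW w f1) (h2 : IsW w f2) :
    ∃ m, IsW w m ∧ EWLe f1 m ∧ EWLe f2 m ∧ ∀ x, IsW w x → EWLe f1 x → EWLe f2 x → EWLe m x := by
  induction w generalizing f1 f2 with
  | nil =>
    subst h1 h2
    refine ⟨[], rfl, .refl, .refl, ?_⟩
    intro x hx h _
    exact h
  | cons g w ih =>
    obtain ⟨cs1, r1, rfl, l1, w1⟩ := h1
    obtain ⟨cs2, r2, rfl, l2, w2⟩ := h2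
    obtain ⟨F, hF, e1, e2, e3⟩ := ih w1 w2
    have hbound : ∀ cs r : List (STerm S ar), IsW w (flat cs r) → ∀ k ∈ K 0 cs,
        k ≤ 0 + forestDeg F := by
      intro cs r hw k hk
      have := Bd_le (Chain_mem (Chain_K 0 cs r) k hk)
      rwa [IsW_deg hw, ← IsW_deg hF] at this
    obtain ⟨ks, c1, c2, c3, c4⟩ := join_chain (ew_Bd hpos e1 0) (ew_Bd hpos e2 0) (Bd_top 0 F)
      (by rw [K_length, K_length, l1, l2]) (Chain_K 0 cs1 r1) (Chain_K 0 cs2 r2) le_rfl le_rfl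
      (Bd_self 0 F) (hbound _ _ w1) (hbound _ _ w2)
    obtain ⟨cs, r, rfl, rfl⟩ := Chain_exists (IsW_red hF) c1
    have l : cs.length = ar g := by
      have := c2.length_eq
      rw [K_length, K_length] at this
      omega
    refine ⟨nd g cs :: r, ⟨cs, r, rfl, l, hF⟩, ew_of hpos l1 e1 c2, ew_of hpos l2 e2 c3, ?_⟩
    rintro x ⟨cs', r', rfl, l', w'⟩ hx1 hx2
    obtain ⟨p1, q1⟩ := of_ew' hpos l1 l' hx1
    obtain ⟨p2, q2⟩ := of_ew' hpos l2 l' hx2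
    have p := e3 _ w' p1 p2
    exact ew_of hpos l p (c4 _ 0 _ (ew_Bd hpos p 0) le_rfl (Chain_K 0 cs' r') q1 q2)

end EW

/-- for any word `w` on a positive signature, `f_min(w) ≼ f_max(w)`, and the
interval `W(w) = [f_min(w), f_max(w)]` of the easterly wind order is a lattice. -/
theorem easterly_wind_interval_lattice {S : Type} {ar : S → ℕ} (hpos : ∀ g : S, 0 < ar g)
    (w : List S) :
    EWLe (fmin (ar := ar) w) (fmax w) ∧
    ∀ f₁ f₂ : List (STerm S ar),
      (EWLe (fmin w) f₁ ∧ EWLe f₁ (fmax w)) →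
      (EWLe (fmin w) f₂ ∧ EWLe f₂ (fmax w)) →
      (∃ m : List (STerm S ar), (EWLe (fmin w) m ∧ EWLe m (fmax w)) ∧
          EWLe m f₁ ∧ EWLe m f₂ ∧
          ∀ g : List (STerm S ar), (EWLe (fmin w) g ∧ EWLe g (fmax w)) →
            EWLe g f₁ → EWLe g f₂ → EWLe g m) ∧
      (∃ j : List (STerm S ar), (EWLe (fmin w) j ∧ EWLe j (fmax w)) ∧
          EWLe f₁ j ∧ EWLe f₂ j ∧
          ∀ g : List (STerm S ar), (EWLe (fmin w) g ∧ EWLe g (fmax w)) →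
            EWLe f₁ g → EWLe f₂ g → EWLe j g) := by
  have mem : ∀ f : List (STerm S ar), (EWLe (fmin w) f ∧ EWLe f (fmax w)) ↔ EW.IsW w f := fun f =>
    ⟨fun h => EW.IsW_ew hpos (EW.IsW_fmin w) h.1, fun h => ⟨EW.fmin_le hpos h, EW.le_fmax hpos h⟩⟩
  refine ⟨EW.fmin_le hpos (EW.IsW_fmax hpos w), ?_⟩
  simp only [mem]
  intro f₁ f₂ h₁ h₂
  exact ⟨EW.meet_exists hpos h₁ h₂, EW.join_exists hpos h₁ h₂⟩
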